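/- Let h, b, γ, p ∈ ℂ. The Virasoro module E_h(b, γ, p) is simple if and only if either (e^h ∉ {1, −1} and γ ∉ {0, 1 − p}), or (e^h = −1 and γ ∉ {0, 1 − p, (1 − p)/2}). -/

import Mathlib

/-- A representation of the Witt algebra `𝔚 = span{d_i : i ≥ -1}`, encoded by the family of
operators `d i` (only the indices `i ≥ -1` are relevant) satisfying
`[d_m, d_n] = (n - m) d_{m+n}`. -/
structure WittRep (W : Type*) [AddCommGroup W] [Module ℂ W] where
  d : ℤ → W →ₗ[ℂ] W
  comm : ∀ m n : ℤ, -1 ≤ m → -1 ≤ n →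
    d m ∘ₗ d n - d n ∘ₗ d m = (((n - m : ℤ) : ℂ)) • d (m + n)

namespace WittRep

variable {W : Type*} [AddCommGroup W] [Module ℂ W]

/-- Condition A : the module lies in the category `O_𝔚`. -/
def InO (ρ : WittRep W) : Prop :=
  ∀ v : W, ∃ n : ℕ, ∀ i : ℤ, (n : ℤ) ≤ i → ρ.d i v = 0

/-- The module is trivial: the Lie algebra acts by zero. -/
def IsTrivial (ρ : WittRep W) : Prop := ∀ i : ℤ, -1 ≤ i → ρ.d i = 0

/-- A `𝔚`-submodule. -/
def Invariant (ρ : WittRep W) (U : Submodule ℂ W) : Prop :=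
  ∀ i : ℤ, -1 ≤ i → ∀ u ∈ U, ρ.d i u ∈ U

/-- Simplicity of a `𝔚`-module. -/
def IsSimple (ρ : WittRep W) : Prop :=
  (∃ v : W, v ≠ 0) ∧ ∀ U : Submodule ℂ W, ρ.Invariant U → U = ⊥ ∨ U = ⊤

/-- A `𝔟`-submodule (`𝔟 = span{d_i : i ≥ 0}`). -/
def BInvariant (ρ : WittRep W) (U : Submodule ℂ W) : Prop :=
  ∀ i : ℤ, 0 ≤ i → ∀ u ∈ U, ρ.d i u ∈ U

/-- The socle `Soc_𝔟(W)`: the sum of the minimal nonzero `𝔟`-submodules. -/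
def Soc (ρ : WittRep W) : Submodule ℂ W :=
  sSup {U | ρ.BInvariant U ∧ U ≠ ⊥ ∧
    ∀ U' : Submodule ℂ W, ρ.BInvariant U' → U' ≠ ⊥ → U' ≤ U → U' = U}

/-- `w₀` is a highest weight vector of weight `b'`. -/
def IsHW (ρ : WittRep W) (w₀ : W) (b' : ℂ) : Prop :=
  w₀ ≠ 0 ∧ ρ.d 0 w₀ = b' • w₀ ∧ ∀ i : ℤ, 1 ≤ i → ρ.d i w₀ = 0

/-- `w₀` generates the `𝔚`-module. -/
def Generates (ρ : WittRep W) (w₀ : W) : Prop :=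
  ∀ U : Submodule ℂ W, ρ.Invariant U → w₀ ∈ U → U = ⊤

/-- The operator `e^{kt} d/dt = Σ_{i ≥ 0} (k^i/i!) d_{i-1}` (a finite sum on each vector of a
module in `O_𝔚`). -/
noncomputable def E (ρ : WittRep W) (k : ℤ) (w : W) : W :=
  ∑ᶠ i : ℕ, (((k : ℂ) ^ i) / (Nat.factorial i : ℂ)) • ρ.d ((i : ℤ) - 1) w

/-- The action of `d_k` on `L(W, λ, a, b) = W ⊗ ℂ[t, t⁻¹]`, realized on `ℤ →₀ W`
(`w ⊗ t^j ↦ Finsupp.single j w`):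
`d_k · (w ⊗ t^j) = ((λ^k e^{kt} − 1) d/dt + a + kb + j) w ⊗ t^{k+j}`. -/
noncomputable def Lact (ρ : WittRep W) (lam a b : ℂ) (k : ℤ) (f : ℤ →₀ W) : ℤ →₀ W :=
  f.sum fun j w => Finsupp.single (k + j)
    (lam ^ k • ρ.E k w - ρ.d (-1) w + (a + (k : ℂ) * b + (j : ℂ)) • w)

/-- The PBW map `ℕ →₀ ℂ → W`, `(k, c) ↦ c • d_{-1}^k w₀`. -/
noncomputable def pbwMap (ρ : WittRep W) (w₀ : W) : (ℕ →₀ ℂ) →ₗ[ℂ] W :=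
  Finsupp.lsum ℂ fun k : ℕ => ((ρ.d (-1)) ^ k) ∘ₗ LinearMap.toSpanSingleton ℂ W w₀

/-- `W` is the Verma `𝔚`-module with highest weight vector `w₀` of highest weight `b'`. -/
def IsVerma (ρ : WittRep W) (w₀ : W) (b' : ℂ) : Prop :=
  ρ.d 0 w₀ = b' • w₀ ∧ (∀ i : ℤ, 1 ≤ i → ρ.d i w₀ = 0) ∧
    Function.Bijective (ρ.pbwMap w₀)

/-- `W^{(n)} = Σ_{i=0}^n d_{-1}^i (Soc_𝔟 W)`. -/
noncomputable def Wn (ρ : WittRep W) (n : ℕ) : Submodule ℂ W :=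
  ⨆ i : Fin (n + 1), Submodule.map ((ρ.d (-1)) ^ (i : ℕ)) ρ.Soc

/-- `L₀(a, b') = span{d₁^i · (w₀ ⊗ t^{2j})} ⊆ L(W, -1, a, b' + 1)`. -/
noncomputable def Lzero (ρ : WittRep W) (a b' : ℂ) (w₀ : W) : Submodule ℂ (ℤ →₀ W) :=
  Submodule.span ℂ
    {g | ∃ (i : ℕ) (j : ℤ), g = (ρ.Lact (-1) a (b' + 1) 1)^[i] (Finsupp.single (2 * j) w₀)}

/-- `L₁(a, b') = span{d₁^i · (w₀ ⊗ t^{2j+1})} ⊆ L(W, -1, a, b' + 1)`. -/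
noncomputable def Lone (ρ : WittRep W) (a b' : ℂ) (w₀ : W) : Submodule ℂ (ℤ →₀ W) :=
  Submodule.span ℂ
    {g | ∃ (i : ℕ) (j : ℤ), g = (ρ.Lact (-1) a (b' + 1) 1)^[i] (Finsupp.single (2 * j + 1) w₀)}

end WittRep

/-- A representation of the Lie algebra `𝔟 = span{d_i : i ≥ 0}`. -/
structure BRep (B : Type*) [AddCommGroup B] [Module ℂ B] where
  d : ℕ → B →ₗ[ℂ] B
  comm : ∀ m n : ℕ, d m ∘ₗ d n - d n ∘ₗ d m = (((n : ℂ) - (m : ℂ))) • d (m + n)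

namespace BRep

variable {B : Type*} [AddCommGroup B] [Module ℂ B]

/-- Condition A : the module lies in the category `O_𝔟`. -/
def InO (ρ : BRep B) : Prop := ∀ v : B, ∃ n : ℕ, ∀ i : ℕ, n ≤ i → ρ.d i v = 0

def IsTrivial (ρ : BRep B) : Prop := ∀ i : ℕ, ρ.d i = 0

def IsSimple (ρ : BRep B) : Prop :=
  (∃ v : B, v ≠ 0) ∧
    ∀ U : Submodule ℂ B, (∀ i : ℕ, ∀ u ∈ U, ρ.d i u ∈ U) → U = ⊥ ∨ U = ⊤

/-- The set of `r ∈ ℤ≥0` such that `d_{r+i} v = 0` for all `i ≥ 1`;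
`ord_𝔟(v)` is its least element. -/
def ordSet (ρ : BRep B) (v : B) : Set ℕ := {r : ℕ | ∀ i : ℕ, r + 1 ≤ i → ρ.d i v = 0}

/-- The action of `d_m` on the Virasoro module `N(B_(c), a) = B ⊗ ℂ[t, t⁻¹]`, realized on
`ℤ →₀ B`:  `d_m · (w ⊗ t^j) = (Σ_{i≥1} (m^i/i!) d_{i-1} + mc + a + j) w ⊗ t^{m+j}`
(`c` is the twist of the `d₀`-action; `c = 0` gives `N(B, a)`). -/
noncomputable def Nact (ρ : BRep B) (a c : ℂ) (m : ℤ) (f : ℤ →₀ B) : ℤ →₀ B :=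
  f.sum fun j w => Finsupp.single (m + j)
    ((∑ᶠ i : ℕ, (((m : ℂ) ^ (i + 1)) / (Nat.factorial (i + 1) : ℂ)) • ρ.d i w) +
      ((m : ℂ) * c + a + (j : ℂ)) • w)

end BRep

/-- For a family `U : ℤ → Submodule ℂ W`, the subspace `⊕_j U j ⊗ t^j` of `W ⊗ ℂ[t,t⁻¹]`. -/
def gradedSub {W : Type*} [AddCommGroup W] [Module ℂ W] (U : ℤ → Submodule ℂ W) :
    Submodule ℂ (ℤ →₀ W) where
  carrier := {f | ∀ j, f j ∈ U j}
  add_mem' := fun hf hg j => by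
    simpa only [Finsupp.add_apply] using (U j).add_mem (hf j) (hg j)
  zero_mem' := fun j => by simp
  smul_mem' := fun c f hf j => by
    simpa only [Finsupp.smul_apply] using (U j).smul_mem c (hf j)

/-- A submodule invariant under a (ℤ-indexed) family of operators. -/
def ActInvariant {V : Type*} [AddCommGroup V] [Module ℂ V] (act : ℤ → V → V)
    (M : Submodule ℂ V) : Prop :=
  ∀ k : ℤ, ∀ u ∈ M, act k u ∈ M

/-- Simplicity of the module given by a family of operators (the central element acts by zero). -/
def ActSimple {V : Type*} [AddCommGroup V] [Module ℂ V] (act : ℤ → V → V) : Prop :=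
  (∃ v : V, v ≠ 0) ∧ ∀ M : Submodule ℂ V, ActInvariant act M → M = ⊥ ∨ M = ⊤

/-- A representation of the Virasoro algebra. -/
structure VirasoroRep (V : Type*) [AddCommGroup V] [Module ℂ V] where
  d : ℤ → V →ₗ[ℂ] V
  z : V →ₗ[ℂ] V
  comm : ∀ m n : ℤ, d m ∘ₗ d n - d n ∘ₗ d m =
    (((n - m : ℤ) : ℂ)) • d (m + n) +
      (if m + n = 0 then (((n : ℂ) ^ 3 - (n : ℂ)) / 12) else 0) • z
  comm_z : ∀ m : ℤ, d m ∘ₗ z = z ∘ₗ d m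

open Polynomial

/-- The forward shift on complex sequences. -/
def shiftSeq : Module.End ℂ (ℕ → ℂ) where
  toFun u n := u (n + 1)
  map_add' _ _ := rfl
  map_smul' _ _ := rfl

theorem expPoly_mem_maxGenEigenspace (μ : ℂ) (p : ℂ[X]) :
    (fun n : ℕ => μ ^ n * p.eval (n : ℂ)) ∈ shiftSeq.maxGenEigenspace μ := by
  rw [Module.End.mem_maxGenEigenspace]
  suffices H : ∀ (D : ℕ) (p : ℂ[X]), p.degree < D →
      ((shiftSeq - μ • (1 : Module.End ℂ (ℕ → ℂ))) ^ D)
        (fun n : ℕ => μ ^ n * p.eval (n : ℂ)) = 0 from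
    ⟨p.natDegree + 1, H _ p (degree_le_natDegree.trans_lt (by exact_mod_cast Nat.lt_succ_self _))⟩
  intro D
  induction D with
  | zero =>
    intro p hp
    have : p = 0 := by simpa [Nat.WithBot.lt_zero_iff] using hp
    subst this
    ext n
    simp
  | succ D ih =>
    intro p hp
    have hq : (C μ * (p.comp (X + C 1) - p)).degree < D := by
      rcases eq_or_ne p 0 with rfl | hp0
      · simp
      have hX : (X + C 1 : ℂ[X]).natDegree = 1 := natDegree_X_add_C 1
      have hc0 : p.comp (X + C 1) ≠ 0 := by
        rw [← leadingCoeff_ne_zero, leadingCoeff_comp (hX ▸ one_ne_zero),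
          (monic_X_add_C (1 : ℂ)).leadingCoeff]
        simpa using hp0
      have h1 : (p.comp (X + C 1) - p).degree < (p.comp (X + C 1)).degree := by
        refine degree_sub_lt_left ?_ hc0 ?_
        · rw [degree_eq_natDegree hc0, degree_eq_natDegree hp0, natDegree_comp, hX, mul_one]
        · rw [leadingCoeff_comp (hX ▸ one_ne_zero),
            (monic_X_add_C (1 : ℂ)).leadingCoeff]
          simp
      rw [degree_eq_natDegree hc0, natDegree_comp, hX, mul_one, ← degree_eq_natDegree hp0] at h1
      have h2 : (C μ * (p.comp (X + C 1) - p)).degree ≤ (p.comp (X + C 1) - p).degree := by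
        rw [← smul_eq_C_mul]
        exact degree_smul_le _ _
      rw [degree_eq_natDegree hp0] at h1 hp
      have h3 : p.natDegree ≤ D := by
        have : p.natDegree < D + 1 := by exact_mod_cast hp
        omega
      exact h2.trans_lt (h1.trans_le (by exact_mod_cast h3))
    rw [pow_succ, Module.End.mul_apply, ← ih _ hq]
    congr 1
    ext n
    simp [shiftSeq]
    ring

/-- Exponential polynomials with distinct nonzero bases are linearly independent. -/
theorem expPoly_eq_zero {ι : Type*} [Fintype ι] (μ : ι → ℂ) (hμ : Function.Injective μ)
    (hμ0 : ∀ i, μ i ≠ 0) (p : ι → ℂ[X])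
    (h : ∀ n : ℕ, ∑ i, μ i ^ n * (p i).eval (n : ℂ) = 0) (i : ι) : p i = 0 := by
  have hind := (Module.End.independent_maxGenEigenspace shiftSeq).comp hμ
  rw [iSupIndep_iff_finsetSum_eq_zero_imp_eq_zero] at hind
  have hz := hind Finset.univ (fun i n => μ i ^ n * (p i).eval (n : ℂ))
    (fun i _ => expPoly_mem_maxGenEigenspace (μ i) (p i))
    (by ext n; simpa using h n) i (Finset.mem_univ i)
  refine eq_zero_of_infinite_isRoot _ ((Set.infinite_range_of_injective
    (Nat.cast_injective (R := ℂ))).mono ?_)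
  rintro _ ⟨n, rfl⟩
  have := congrFun hz n
  simpa [hμ0 i] using this

/-- If all values of an exponential polynomial with distinct nonzero bases lie in a subspace, so do
all of its coefficients. -/
theorem expPoly_coeff_mem {ι : Type*} [Fintype ι] (μ : ι → ℂ) (hμ : Function.Injective μ)
    (hμ0 : ∀ i, μ i ≠ 0) (G : ι → ℂ[X][X]) (N : Submodule ℂ ℂ[X])
    (h : ∀ n : ℕ, ∑ i, μ i ^ n • (G i).eval (C (n : ℂ)) ∈ N) (i : ι) (k : ℕ) :
    (G i).coeff k ∈ N := by
  by_contra hk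
  obtain ⟨φ, hφ, hN⟩ := Submodule.exists_le_ker_of_notMem hk
  refine hφ ?_
  have heval : ∀ (Q : ℂ[X][X]) (n : ℂ),
      (∑ m ∈ Q.support, monomial m (φ (Q.coeff m))).eval n = φ (Q.eval (C n)) := by
    intro Q n
    rw [eval_finsetSum, eval_eq_sum (p := Q), Polynomial.sum, map_sum]
    refine Finset.sum_congr rfl fun m _ => ?_
    rw [eval_monomial, ← C_pow, mul_comm (Q.coeff m), ← smul_eq_C_mul, map_smul, smul_eq_mul,
      mul_comm]
  have hz := expPoly_eq_zero μ hμ hμ0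
    (fun i => ∑ m ∈ (G i).support, monomial m (φ ((G i).coeff m))) (fun n => by
      have := hN (h n)
      simpa [heval] using this) i
  have := congrArg (fun q => q.coeff k) hz
  simp only [finsetSum_coeff, coeff_monomial, coeff_zero] at this
  rw [Finset.sum_ite_eq'] at this
  by_cases hs : k ∈ (G i).support
  · simpa [hs] using this
  · rw [notMem_support_iff.mp hs, map_zero]

theorem eval_map_C (f q : ℂ[X]) : (f.map C).eval q = f.comp q := by
  rw [eval_map]; rfl

theorem coeff_linear_mul (u v : ℂ[X]) (P : ℂ[X][X]) (d : ℕ) (hP : P.natDegree ≤ d) :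
    ((C u + C v * X) * P).natDegree ≤ d + 1 ∧
      ((C u + C v * X) * P).coeff (d + 1) = v * P.coeff d := by
  constructor
  · refine natDegree_mul_le.trans ?_
    have : (C u + C v * X : ℂ[X][X]).natDegree ≤ 1 := by compute_degree
    omega
  · rw [add_mul, mul_assoc, coeff_add, coeff_C_mul, coeff_C_mul, coeff_X_mul,
      coeff_eq_zero_of_natDegree_lt (by omega), mul_zero, zero_add]

theorem coeff_comp_linear (f : ℂ[X]) (u : ℂ[X]) (c : ℂ) (hc : c ≠ 0) :
    ((f.map C).comp (C u + C (C c) * X)).natDegree ≤ f.natDegree ∧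
      ((f.map C).comp (C u + C (C c) * X)).coeff f.natDegree =
        C (f.leadingCoeff * c ^ f.natDegree) := by
  have hC : (C c : ℂ[X]) ≠ 0 := by simpa using hc
  have hX : (C u + C (C c) * X : ℂ[X][X]).natDegree = 1 := by
    rw [add_comm]; exact natDegree_linear hC
  have hl : (C u + C (C c) * X : ℂ[X][X]).leadingCoeff = C c := by
    rw [add_comm]; exact leadingCoeff_linear hC
  have hm : (f.map (C : ℂ →+* ℂ[X])).natDegree = f.natDegree :=
    natDegree_map_eq_of_injective C_injective f
  have hd : ((f.map C).comp (C u + C (C c) * X)).natDegree = f.natDegree := by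
    rw [natDegree_comp, hX, hm, mul_one]
  refine ⟨hd.le, ?_⟩
  have := leadingCoeff_comp (p := f.map C) (q := (C u + C (C c) * X : ℂ[X][X])) (by simp [hX])
  rw [leadingCoeff, hd, hl, hm, leadingCoeff_map_of_injective C_injective] at this
  rw [this]
  simp

/-- The action of `d_k` on `L(W, λ, a, β)` from weight `j` to weight `k + j`, transported to `ℂ[X]`
along `W = ℂ[d_{-1}] w₀`, where `w₀` has highest weight `-γ`. -/
noncomputable def polyAct (lam a β γ : ℂ) (j k : ℤ) (f : ℂ[X]) : ℂ[X] :=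
  C (lam ^ k) * ((X - C ((k : ℂ) * γ)) * f.comp (X - C (k : ℂ))) +
    (C (a + (k : ℂ) * β + (j : ℂ)) - X) * f

/-- A family of subspaces of `ℂ[X]`, one for each weight, stable under `polyAct`. -/
def PolyInvariant (lam a β γ : ℂ) (U : ℤ → Submodule ℂ ℂ[X]) : Prop :=
  ∀ j k : ℤ, ∀ f ∈ U j, polyAct lam a β γ j k f ∈ U (k + j)

/-- The part of `polyAct (s - n) ∘ polyAct n` with `n`-dependence polynomial. -/
noncomputable def compConst (lam a β γ : ℂ) (j s : ℤ) (f : ℂ[X]) : ℂ[X][X] :=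
  C (C (lam ^ s)) * ((C (X - C (s * γ)) + C (C γ) * X) *
      ((C (X - C (s : ℂ)) + C (C (1 - γ)) * X) * C (f.comp (X - C (s : ℂ))))) +
    (C (C (a + j + s * β) - X) + C (C (1 - β)) * X) *
      ((C (C (a + j) - X) + C (C β) * X) * C f)

/-- The coefficient of `λ⁻ⁿ` in `polyAct (s - n) ∘ polyAct n`. -/
noncomputable def compInv (lam a β γ : ℂ) (j s : ℤ) (f : ℂ[X]) : ℂ[X][X] :=
  C (C (lam ^ s)) * ((C (X - C (s * γ)) + C (C γ) * X) *
    ((C (C (a + j + s) - X) + C (C (β - 1)) * X) *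
      (f.map C).comp (C (X - C (s : ℂ)) + C (C 1) * X)))

/-- The coefficient of `λⁿ` in `polyAct (s - n) ∘ polyAct n`. -/
noncomputable def compPow (a β γ : ℂ) (j s : ℤ) (f : ℂ[X]) : ℂ[X][X] :=
  (C (C (a + j + s * β) - X) + C (C (1 - β)) * X) *
    ((C X + C (C (-γ)) * X) * (f.map C).comp (C X + C (C (-1)) * X))

theorem coeff_compInv (lam a β γ : ℂ) (j s : ℤ) (f : ℂ[X]) :
    (compInv lam a β γ j s f).coeff (f.natDegree + 1 + 1) =
      C (lam ^ s * (γ * ((β - 1) * f.leadingCoeff))) := by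
  obtain ⟨h1, h1'⟩ := coeff_comp_linear f (X - C (s : ℂ)) 1 one_ne_zero
  obtain ⟨h2, h2'⟩ := coeff_linear_mul (C (a + j + s) - X) (C (β - 1)) _ _ h1
  obtain ⟨h3, h3'⟩ := coeff_linear_mul (X - C (s * γ)) (C γ) _ _ h2
  rw [compInv, coeff_C_mul, h3', h2', h1']
  simp

theorem coeff_compPow (a β γ : ℂ) (j s : ℤ) (f : ℂ[X]) :
    (compPow a β γ j s f).coeff (f.natDegree + 1 + 1) =
      C (γ * ((β - 1) * f.leadingCoeff) * (-1) ^ f.natDegree) := by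
  obtain ⟨h1, h1'⟩ := coeff_comp_linear f X (-1) (by simp)
  obtain ⟨h2, h2'⟩ := coeff_linear_mul X (C (-γ)) _ _ h1
  obtain ⟨h3, h3'⟩ := coeff_linear_mul (C (a + j + s * β) - X) (C (1 - β)) _ _ h2
  rw [compPow, h3', h2', h1', ← C_mul, ← C_mul]
  congr 1
  ring

theorem polyAct_polyAct (lam a β γ : ℂ) (hlam : lam ≠ 0) (j s : ℤ) (f : ℂ[X]) (n : ℕ) :
    polyAct lam a β γ (n + j) (s - n) (polyAct lam a β γ j n f) =
      (compConst lam a β γ j s f).eval (C (n : ℂ)) +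
      (lam⁻¹) ^ n • (compInv lam a β γ j s f).eval (C (n : ℂ)) +
      lam ^ n • (compPow a β γ j s f).eval (C (n : ℂ)) := by
  refine Polynomial.funext fun x => ?_
  have e1 : lam ^ (s - (n : ℤ)) = lam ^ s * (lam⁻¹) ^ n := by
    rw [zpow_sub₀ hlam, zpow_natCast, div_eq_mul_inv, inv_pow]
  have e2 : lam ^ n * (lam⁻¹) ^ n = 1 := by
    rw [← mul_pow, mul_inv_cancel₀ hlam, one_pow]
  simp only [polyAct, compConst, compInv, compPow, eval_add, eval_mul, eval_C, eval_X, eval_sub,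
    eval_comp, eval_smul, smul_eq_mul, eval_map_C, e1, zpow_natCast]
  push_cast
  have a1 : x - (s - n) - n = x - (s : ℂ) := by ring
  have a2 : x - (s - n) = x - (s : ℂ) + 1 * n := by ring
  have a3 : x - n = x + -1 * (n : ℂ) := by ring
  rw [a1, a2, a3]
  generalize eval (x - (s : ℂ)) f = A
  generalize eval (x - (s : ℂ) + 1 * n) f = B
  generalize eval (x + -1 * (n : ℂ)) f = D
  linear_combination (lam ^ s * (x - (s - n) * γ) * (x - s + n - n * γ) * A) * e2

/-- A subspace of `ℂ[X]` containing a nonzero constant contains `1`. -/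
theorem one_mem_of_C_mem {N : Submodule ℂ ℂ[X]} {c : ℂ} (hc : c ≠ 0) (h : C c ∈ N) :
    (1 : ℂ[X]) ∈ N := by
  have := N.smul_mem c⁻¹ h
  rwa [smul_C, smul_eq_mul, inv_mul_cancel₀ hc, C_1] at this

namespace PolyInvariant

variable {lam a β γ : ℂ} {U : ℤ → Submodule ℂ ℂ[X]}

theorem comp_mem (hU : PolyInvariant lam a β γ U) (hlam : lam ≠ 0) {j : ℤ} (s : ℤ) {f : ℂ[X]}
    (hf : f ∈ U j) (n : ℕ) :
    (compConst lam a β γ j s f).eval (C (n : ℂ)) +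
      (lam⁻¹) ^ n • (compInv lam a β γ j s f).eval (C (n : ℂ)) +
      lam ^ n • (compPow a β γ j s f).eval (C (n : ℂ)) ∈ U (s + j) := by
  have := hU _ (s - n) _ (hU j n f hf)
  rw [polyAct_polyAct _ _ _ _ hlam] at this
  convert this using 2
  ring

theorem one_mem_of_ne_neg_one (hU : PolyInvariant lam a β γ U) (hlam : lam ≠ 0) (h1 : lam ≠ 1)
    (h2 : lam ≠ -1) (hγ : γ ≠ 0) (hβ : β ≠ 1) {j : ℤ} {f : ℂ[X]} (hf : f ∈ U j) (hf0 : f ≠ 0)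
    (s : ℤ) : (1 : ℂ[X]) ∈ U (s + j) := by
  have hsq : lam * lam ≠ 1 := by
    rw [Ne, mul_self_eq_one_iff]
    tauto
  have hinj : Function.Injective ![1, lam⁻¹, lam] := by
    have hi : lam⁻¹ ≠ lam := fun h => hsq (by
      nth_rw 1 [← h]
      exact inv_mul_cancel₀ hlam)
    intro x y
    fin_cases x <;> fin_cases y <;> simp [h1, h1.symm, hi, hi.symm, eq_comm]
  have := expPoly_coeff_mem ![1, lam⁻¹, lam] hinj (by intro i; fin_cases i <;> simp [hlam])
    ![compConst lam a β γ j s f, compInv lam a β γ j s f, compPow a β γ j s f] (U (s + j))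
    (fun n => by simpa [Fin.sum_univ_three] using hU.comp_mem hlam s hf n) 1
    (f.natDegree + 1 + 1)
  simp only [Matrix.cons_val_one, Matrix.cons_val_zero, coeff_compInv] at this
  refine one_mem_of_C_mem ?_ this
  exact mul_ne_zero (zpow_ne_zero _ hlam) (mul_ne_zero hγ (mul_ne_zero (sub_ne_zero.mpr hβ)
    (leadingCoeff_ne_zero.mpr hf0)))

theorem one_mem_of_eq_neg_one (hU : PolyInvariant (-1) a β γ U) (hγ : γ ≠ 0) (hβ : β ≠ 1)
    (hγβ : γ ≠ 1 - β) {j : ℤ} {f : ℂ[X]} (hf : f ∈ U j) (hf0 : f ≠ 0) (J : ℤ) :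
    (1 : ℂ[X]) ∈ U J := by
  have heven : ∀ m : ℤ, (1 : ℂ[X]) ∈ U (f.natDegree + 2 * m + j) := by
    intro m
    set s : ℤ := f.natDegree + 2 * m with hs
    have hsgn : (-1 : ℂ) ^ s = (-1) ^ f.natDegree := by
      rw [hs, zpow_add₀ (by simp), zpow_mul, zpow_natCast]
      simp
    have hinj : Function.Injective ![(1 : ℂ), -1] := by
      have : (1 : ℂ) ≠ -1 := by norm_num
      intro x y
      fin_cases x <;> fin_cases y <;> simp [this, this.symm]
    have := expPoly_coeff_mem ![(1 : ℂ), -1] hinj (by intro i; fin_cases i <;> simp)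
      ![compConst (-1) a β γ j s f, compInv (-1) a β γ j s f + compPow a β γ j s f] (U (s + j))
      (fun n => by
        have := hU.comp_mem (by simp) s hf n
        rw [inv_neg, inv_one, add_assoc (eval _ _), ← smul_add] at this
        simpa [Fin.sum_univ_two] using this) 1 (f.natDegree + 1 + 1)
    simp only [Matrix.cons_val_one, Matrix.cons_val_zero, coeff_add, coeff_compInv, coeff_compPow,
      ← C_add, hsgn] at this
    refine one_mem_of_C_mem ?_ this
    have : γ * ((β - 1) * f.leadingCoeff) * (2 * (-1) ^ f.natDegree) ≠ 0 :=
      mul_ne_zero (mul_ne_zero hγ (mul_ne_zero (sub_ne_zero.mpr hβ)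
        (leadingCoeff_ne_zero.mpr hf0))) (by simp)
    intro h0
    apply this
    rw [← h0]
    ring
  rcases Int.even_or_odd' (J - f.natDegree - j) with ⟨m, hm | hm⟩
  · convert heven m using 2
    omega
  · have k1 := hU _ 1 _ (heven m)
    have k3 := hU _ 3 _ (heven (m - 1))
    rw [show (1 : ℤ) + (f.natDegree + 2 * m + j) = J by omega] at k1
    rw [show (3 : ℤ) + (f.natDegree + 2 * (m - 1) + j) = J by omega] at k3
    refine one_mem_of_C_mem (c := 2 * (γ - (1 - β))) ?_ ?_
    · exact mul_ne_zero two_ne_zero (sub_ne_zero.mpr hγβ)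
    · convert (U J).sub_mem k3 k1 using 1
      refine Polynomial.funext fun x => ?_
      simp [polyAct, show (-1 : ℂ) ^ (3 : ℤ) = -1 by norm_num [zpow_ofNat]]
      ring

theorem eq_top_of_one_mem (hU : PolyInvariant lam a β γ U) (h1 : lam ≠ 1)
    (hone : ∀ j, (1 : ℂ[X]) ∈ U j) (j : ℤ) : U j = ⊤ := by
  suffices H : ∀ (D : ℕ) (j : ℤ) (f : ℂ[X]), f.natDegree ≤ D → f ∈ U j from
    eq_top_iff.mpr fun f _ => H _ j f le_rfl
  intro D
  induction D with
  | zero =>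
    intro j f hf
    rw [eq_C_of_natDegree_le_zero hf, ← mul_one (C _), ← smul_eq_C_mul]
    exact (U j).smul_mem _ (hone j)
  | succ D ih =>
    intro j f hf
    have hX := hU (j - 1) 1 _ (ih (j - 1) (X ^ D) (by simp))
    rw [add_sub_cancel] at hX
    set q := polyAct lam a β γ (j - 1) 1 (X ^ D) with hq
    have hl : lam - 1 ≠ 0 := sub_ne_zero.mpr h1
    -- `X ^ D` is sent to a polynomial of degree `D + 1` with leading coefficient `lam - 1`.
    have hdec : q = C (lam - 1) * X ^ (D + 1) +
        (C lam * (X * ((X - C 1) ^ D - X ^ D)) - C (lam * γ) * (X - C 1) ^ D +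
          C (a + β + j - 1) * X ^ D) := by
      refine Polynomial.funext fun x => ?_
      simp [hq, polyAct]
      ring
    have hlow : (X * ((X - C 1) ^ D - X ^ D) : ℂ[X]).natDegree ≤ D := by
      rcases Nat.eq_zero_or_pos D with rfl | hD
      · simp
      have hm : ((X - C 1 : ℂ[X]) ^ D).Monic := (monic_X_sub_C 1).pow D
      have hdeg : ((X - C 1 : ℂ[X]) ^ D).natDegree = D := by
        rw [natDegree_pow, natDegree_X_sub_C, mul_one]
      have : ((X - C 1) ^ D - X ^ D : ℂ[X]).degree < ((X - C 1 : ℂ[X]) ^ D).degree := by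
        refine degree_sub_lt_left ?_ hm.ne_zero ?_
        · rw [degree_eq_natDegree hm.ne_zero, hdeg, degree_X_pow]
        · rw [hm.leadingCoeff, (monic_X_pow D).leadingCoeff]
      rw [degree_eq_natDegree hm.ne_zero, hdeg] at this
      have h2 : ((X - C 1) ^ D - X ^ D : ℂ[X]).natDegree < D := by
        rcases eq_or_ne ((X - C 1) ^ D - X ^ D : ℂ[X]) 0 with h0 | h0
        · rw [h0]; simpa using hD
        · exact (natDegree_lt_iff_degree_lt h0).mpr this
      refine natDegree_mul_le.trans ?_
      rw [natDegree_X]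
      omega
    have hpow : ((X - C 1 : ℂ[X]) ^ D).natDegree ≤ D := by
      rw [natDegree_pow, natDegree_X_sub_C, mul_one]
    have hrest : (C lam * (X * ((X - C 1) ^ D - X ^ D)) - C (lam * γ) * (X - C 1) ^ D +
        C (a + β + j - 1) * X ^ D : ℂ[X]).natDegree ≤ D :=
      natDegree_add_le_of_degree_le
        ((natDegree_sub_le_of_le ((natDegree_C_mul_le _ _).trans hlow)
          ((natDegree_C_mul_le _ _).trans hpow)).trans (max_self D).le)
        ((natDegree_C_mul_le _ _).trans (by simp))
    have hmem : (X : ℂ[X]) ^ (D + 1) ∈ U j := by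
      have := (U j).smul_mem (lam - 1)⁻¹ ((U j).sub_mem hX (ih j _ hrest))
      rwa [hdec, add_sub_cancel_right, ← smul_eq_C_mul, smul_smul, inv_mul_cancel₀ hl,
        one_smul] at this
    have hsplit : f = f.coeff (D + 1) • X ^ (D + 1) +
        (f - f.coeff (D + 1) • X ^ (D + 1)) := by ring
    rw [hsplit]
    refine (U j).add_mem ((U j).smul_mem _ hmem) (ih j _ ?_)
    rw [natDegree_le_iff_coeff_eq_zero]
    intro N hN
    rcases eq_or_lt_of_le (Nat.succ_le_of_lt hN) with rfl | hN'
    · simp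
    · have : N ≠ D + 1 := by omega
      simp only [coeff_sub, coeff_smul, coeff_X_pow, this, if_false, smul_zero, sub_zero]
      exact coeff_eq_zero_of_natDegree_lt (by omega)

theorem eq_bot_or_eq_top (hU : PolyInvariant lam a β γ U) (hlam : lam ≠ 0) (h1 : lam ≠ 1)
    (hγ : γ ≠ 0) (hβ : β ≠ 1) (hneg : lam = -1 → γ ≠ 1 - β) :
    (∀ j, U j = ⊥) ∨ ∀ j, U j = ⊤ := by
  by_cases hbot : ∀ j, U j = ⊥
  · exact Or.inl hbot
  refine Or.inr (hU.eq_top_of_one_mem h1 fun J => ?_)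
  push Not at hbot
  obtain ⟨j, hj⟩ := hbot
  obtain ⟨f, hf, hf0⟩ := (U j).ne_bot_iff.mp hj
  by_cases h2 : lam = -1
  · subst h2
    exact hU.one_mem_of_eq_neg_one hγ hβ (hneg rfl) hf hf0 J
  · simpa using hU.one_mem_of_ne_neg_one hlam h1 h2 hγ hβ hf hf0 (J - j)

end PolyInvariant

namespace WittRep

variable {W : Type*} [AddCommGroup W] [Module ℂ W] (ρ : WittRep W)

/-- The map `ℂ[X] → W`, `f ↦ f(d_{-1}) w₀`. -/
noncomputable def ofPoly (w₀ : W) : ℂ[X] →ₗ[ℂ] W :=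
  LinearMap.applyₗ w₀ ∘ₗ (aeval (ρ.d (-1))).toLinearMap

theorem ofPoly_apply (w₀ : W) (f : ℂ[X]) : ρ.ofPoly w₀ f = aeval (ρ.d (-1)) f w₀ := rfl

theorem ofPoly_one (w₀ : W) : ρ.ofPoly w₀ 1 = w₀ := by
  simp [ofPoly_apply]

theorem ofPoly_X_mul (w₀ : W) (f : ℂ[X]) : ρ.ofPoly w₀ (X * f) = ρ.d (-1) (ρ.ofPoly w₀ f) := by
  simp [ofPoly_apply]

theorem d_d_neg_one (i : ℤ) (hi : -1 ≤ i) (w : W) :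
    ρ.d i (ρ.d (-1) w) = ρ.d (-1) (ρ.d i w) - ((i : ℂ) + 1) • ρ.d (i - 1) w := by
  have := LinearMap.congr_fun (ρ.comm i (-1) hi le_rfl) w
  simp only [LinearMap.sub_apply, LinearMap.comp_apply, LinearMap.smul_apply] at this
  rw [sub_eq_iff_eq_add.mp this, ← sub_eq_add_neg i 1]
  push_cast
  module

variable {ρ}

theorem E_eq_sum (hO : ρ.InO) (w : W) :
    ∃ N : ℕ, ∀ M ≥ N, ∀ k : ℤ, ρ.E k w =
      ∑ i ∈ Finset.range M, (((k : ℂ) ^ i) / (Nat.factorial i : ℂ)) • ρ.d ((i : ℤ) - 1) w := by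
  obtain ⟨n, hn⟩ := hO w
  refine ⟨n + 1, fun M hM k => finsum_eq_finsetSum_of_support_subset _ fun i hi => ?_⟩
  by_contra hiM
  refine hi ?_
  have : M ≤ i := by simpa using hiM
  simp only [hn ((i : ℤ) - 1) (by omega), smul_zero]

theorem E_add (hO : ρ.InO) (k : ℤ) (v w : W) : ρ.E k (v + w) = ρ.E k v + ρ.E k w := by
  obtain ⟨N₁, h₁⟩ := E_eq_sum hO v
  obtain ⟨N₂, h₂⟩ := E_eq_sum hO w
  obtain ⟨N₃, h₃⟩ := E_eq_sum hO (v + w)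
  rw [h₁ (N₁ + N₂ + N₃) (by omega), h₂ (N₁ + N₂ + N₃) (by omega), h₃ (N₁ + N₂ + N₃) (by omega)]
  simp only [map_add, smul_add, Finset.sum_add_distrib]

theorem E_smul (hO : ρ.InO) (k : ℤ) (c : ℂ) (w : W) : ρ.E k (c • w) = c • ρ.E k w := by
  obtain ⟨N₁, h₁⟩ := E_eq_sum hO w
  obtain ⟨N₂, h₂⟩ := E_eq_sum hO (c • w)
  rw [h₁ (N₁ + N₂) (by omega), h₂ (N₁ + N₂) (by omega), Finset.smul_sum]
  exact Finset.sum_congr rfl fun i _ => by rw [map_smul, smul_comm]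

theorem E_zero_right (k : ℤ) : ρ.E k 0 = 0 := by
  simp [E]

theorem E_zero_left (w : W) : ρ.E 0 w = ρ.d (-1) w := by
  rw [E, finsum_eq_single _ 0 (fun i hi => by simp [hi])]
  simp

theorem E_d_neg_one (hO : ρ.InO) (k : ℤ) (w : W) :
    ρ.E k (ρ.d (-1) w) = ρ.d (-1) (ρ.E k w) - (k : ℂ) • ρ.E k w := by
  obtain ⟨N₁, h₁⟩ := E_eq_sum hO w
  obtain ⟨N₂, h₂⟩ := E_eq_sum hO (ρ.d (-1) w)
  have hterm : ∀ i : ℕ, (((k : ℂ) ^ i) / (Nat.factorial i : ℂ)) • ρ.d ((i : ℤ) - 1) (ρ.d (-1) w) =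
      ρ.d (-1) ((((k : ℂ) ^ i) / (Nat.factorial i : ℂ)) • ρ.d ((i : ℤ) - 1) w) -
        (((k : ℂ) ^ i) / (Nat.factorial i : ℂ) * i) • ρ.d ((i : ℤ) - 1 - 1) w := by
    intro i
    rw [d_d_neg_one _ _ (by omega), smul_sub, smul_smul, map_smul]
    push_cast
    rw [sub_add_cancel]
  rw [h₂ (N₁ + N₂ + 1) (by omega), Finset.sum_congr rfl fun i _ => hterm i,
    Finset.sum_sub_distrib, ← map_sum, ← h₁ (N₁ + N₂ + 1) (by omega), Finset.sum_range_succ']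
  congr 1
  rw [h₁ (N₁ + N₂) (by omega), Finset.smul_sum]
  simp only [Nat.cast_zero, mul_zero, zero_smul, add_zero]
  refine Finset.sum_congr rfl fun i _ => ?_
  rw [smul_smul]
  congr 1
  · rw [Nat.factorial_succ, pow_succ]
    have h1 : (Nat.factorial i : ℂ) ≠ 0 := by exact_mod_cast Nat.factorial_ne_zero i
    have h2 : ((i : ℂ) + 1) ≠ 0 := by exact_mod_cast Nat.succ_ne_zero i
    push_cast
    field_simp
  · congr 2
    push_cast
    ring

theorem E_highestWeight {w₀ : W} {γ : ℂ} (h0 : ρ.d 0 w₀ = (-γ) • w₀)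
    (hpos : ∀ i : ℤ, 1 ≤ i → ρ.d i w₀ = 0) (k : ℤ) :
    ρ.E k w₀ = ρ.d (-1) w₀ - ((k : ℂ) * γ) • w₀ := by
  rw [E, finsum_eq_finsetSum_of_support_subset (s := Finset.range 2) _ fun i hi => ?_]
  · simp [Finset.sum_range_succ, h0, smul_smul, sub_eq_add_neg]
  · by_contra hi2
    refine hi ?_
    have : 1 < i := by simpa using hi2
    simp only [hpos ((i : ℤ) - 1) (by omega), smul_zero]

theorem E_ofPoly (hO : ρ.InO) {w₀ : W} {γ : ℂ} (h0 : ρ.d 0 w₀ = (-γ) • w₀)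
    (hpos : ∀ i : ℤ, 1 ≤ i → ρ.d i w₀ = 0) (k : ℤ) (f : ℂ[X]) :
    ρ.E k (ρ.ofPoly w₀ f) =
      ρ.ofPoly w₀ ((X - C ((k : ℂ) * γ)) * f.comp (X - C (k : ℂ))) := by
  induction f using Polynomial.induction_on with
  | C c =>
    have hc : (C c : ℂ[X]) = c • 1 := by rw [smul_eq_C_mul, mul_one]
    rw [hc, map_smul, E_smul hO, ofPoly_one, E_highestWeight h0 hpos, smul_comp, one_comp,
      mul_smul_comm, map_smul, sub_mul, map_sub, ofPoly_X_mul, ← smul_eq_C_mul, map_smul,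
      ofPoly_one]
  | add f g hf hg => rw [map_add, E_add hO, hf, hg, add_comp, mul_add, map_add]
  | monomial n c ih =>
    have hX : C c * X ^ (n + 1) = X * (C c * X ^ n) := by ring
    rw [hX, ofPoly_X_mul, E_d_neg_one hO, ih, ← ofPoly_X_mul, ← map_smul, ← map_sub, mul_comp X,
      X_comp, smul_eq_C_mul]
    congr 1
    ring

theorem d_ofPoly_mem_range {w₀ : W} {γ : ℂ} (h0 : ρ.d 0 w₀ = (-γ) • w₀)
    (hpos : ∀ i : ℤ, 1 ≤ i → ρ.d i w₀ = 0) (f : ℂ[X]) :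
    ∀ i : ℤ, -1 ≤ i → ρ.d i (ρ.ofPoly w₀ f) ∈ LinearMap.range (ρ.ofPoly w₀) := by
  have hneg : ∀ v ∈ LinearMap.range (ρ.ofPoly w₀), ρ.d (-1) v ∈ LinearMap.range (ρ.ofPoly w₀) := by
    rintro _ ⟨g, rfl⟩
    exact ⟨X * g, ofPoly_X_mul _ _ _⟩
  have hw : w₀ ∈ LinearMap.range (ρ.ofPoly w₀) := ⟨1, ofPoly_one _ _⟩
  induction f using Polynomial.induction_on with
  | C c =>
    intro i hi
    have hc : (C c : ℂ[X]) = c • 1 := by rw [smul_eq_C_mul, mul_one]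
    rw [hc, map_smul, map_smul, ofPoly_one]
    refine Submodule.smul_mem _ _ ?_
    obtain rfl | rfl | hi' : i = -1 ∨ i = 0 ∨ 1 ≤ i := by omega
    · exact hneg _ hw
    · rw [h0]
      exact Submodule.smul_mem _ _ hw
    · rw [hpos i hi']
      exact Submodule.zero_mem _
  | add f g hf hg =>
    intro i hi
    rw [map_add, map_add]
    exact Submodule.add_mem _ (hf i hi) (hg i hi)
  | monomial n c ih =>
    intro i hi
    have hX : C c * X ^ (n + 1) = X * (C c * X ^ n) := by ring
    rw [hX, ofPoly_X_mul]
    rcases eq_or_lt_of_le hi with rfl | hi'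
    · exact hneg _ (ih _ le_rfl)
    · rw [d_d_neg_one _ _ hi]
      exact Submodule.sub_mem _ (hneg _ (ih i hi)) (Submodule.smul_mem _ _ (ih _ (by omega)))

theorem ofPoly_injective (hO : ρ.InO) {w₀ : W} {γ : ℂ} (hγ : γ ≠ 0) (hw : ρ.IsHW w₀ (-γ)) :
    Function.Injective (ρ.ofPoly w₀) := by
  obtain ⟨hne, h0, hpos⟩ := hw
  rw [← LinearMap.ker_eq_bot, eq_bot_iff]
  intro f hf
  by_contra hf0
  have hval : ∀ n : ℕ, ((C X + C (C (-γ)) * X) *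
      (f.map C).comp (C X + C (C (-1)) * X) : ℂ[X][X]).eval (C (n : ℂ)) ∈
        LinearMap.ker (ρ.ofPoly w₀) := by
    intro n
    have h := E_ofPoly hO h0 hpos n f
    rw [LinearMap.mem_ker.mp hf, E_zero_right] at h
    rw [LinearMap.mem_ker, h]
    congr 1
    simp only [eval_mul, eval_add, eval_C, eval_X, eval_comp, eval_map_C]
    simp [sub_eq_add_neg, mul_comm]
  obtain ⟨h1, h1'⟩ := coeff_comp_linear f X (-1) (by simp)
  have hmem := expPoly_coeff_mem (fun _ : Unit => (1 : ℂ)) (fun _ _ _ => rfl) (by simp)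
    (fun _ => (C X + C (C (-γ)) * X) * (f.map C).comp (C X + C (C (-1)) * X))
    (LinearMap.ker (ρ.ofPoly w₀)) (fun n => by simpa using hval n) () (f.natDegree + 1)
  simp only [(coeff_linear_mul X (C (-γ)) _ _ h1).2, h1', ← C_mul] at hmem
  have hf0' : f ≠ 0 := hf0
  have := one_mem_of_C_mem (by simp [hγ, hf0']) hmem
  rw [LinearMap.mem_ker, ofPoly_one] at this
  exact hne this

theorem ofPoly_surjective (hs : ρ.IsSimple) {w₀ : W} {γ : ℂ} (hw : ρ.IsHW w₀ (-γ)) :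
    Function.Surjective (ρ.ofPoly w₀) := by
  obtain ⟨hne, h0, hpos⟩ := hw
  rw [← LinearMap.range_eq_top]
  refine (hs.2 _ ?_).resolve_left fun hbot => ?_
  · rintro i hi _ ⟨f, rfl⟩
    exact d_ofPoly_mem_range h0 hpos f i hi
  · have : w₀ ∈ LinearMap.range (ρ.ofPoly w₀) := ⟨1, ofPoly_one _ _⟩
    rw [hbot, Submodule.mem_bot] at this
    exact hne this

theorem ofPoly_bijective_of_isVerma {w₀ : W} {b' : ℂ} (hv : ρ.IsVerma w₀ b') :
    Function.Bijective (ρ.ofPoly w₀) := by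
  have : ρ.ofPoly w₀ = ρ.pbwMap w₀ ∘ₗ (basisMonomials ℂ).repr.toLinearMap := by
    refine (basisMonomials ℂ).ext fun k => ?_
    rw [LinearMap.comp_apply, LinearEquiv.coe_coe, Module.Basis.repr_self]
    simp [pbwMap, ofPoly_apply, coe_basisMonomials, aeval_monomial]
  rw [this, LinearMap.coe_comp]
  exact hv.2.2.comp (basisMonomials ℂ).repr.bijective

theorem Lact_single (lam a β : ℂ) (k j : ℤ) (w : W) :
    ρ.Lact lam a β k (Finsupp.single j w) = Finsupp.single (k + j)
      (lam ^ k • ρ.E k w - ρ.d (-1) w + (a + (k : ℂ) * β + (j : ℂ)) • w) := by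
  rw [Lact, Finsupp.sum_single_index]
  simp [E_zero_right]

theorem Lact_single_ofPoly (hO : ρ.InO) {w₀ : W} {γ : ℂ} (h0 : ρ.d 0 w₀ = (-γ) • w₀)
    (hpos : ∀ i : ℤ, 1 ≤ i → ρ.d i w₀ = 0) (lam a β : ℂ) (k j : ℤ) (f : ℂ[X]) :
    ρ.Lact lam a β k (Finsupp.single j (ρ.ofPoly w₀ f)) =
      Finsupp.single (k + j) (ρ.ofPoly w₀ (polyAct lam a β γ j k f)) := by
  rw [Lact_single, E_ofPoly hO h0 hpos, ← ofPoly_X_mul, ← map_smul, ← map_smul, ← map_sub,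
    ← map_add, polyAct, smul_eq_C_mul, smul_eq_C_mul]
  congr 2
  ring

theorem Lact_zero_apply (lam a β : ℂ) (f : ℤ →₀ W) (j : ℤ) :
    ρ.Lact lam a β 0 f j = (a + (j : ℂ)) • f j := by
  rw [Lact, Finsupp.sum_apply, Finsupp.sum, Finset.sum_eq_single j]
  · simp [E_zero_left]
  · intro i _ hi
    simp [hi]
  · intro hj
    simp [Finsupp.notMem_support_iff.mp hj, E_zero_right]

/-- Submodules of `L(W, λ, a, β)` are graded, the homogeneous components being eigenspaces of
`d_0`. -/
theorem single_apply_mem {lam a β : ℂ} {M : Submodule ℂ (ℤ →₀ W)}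
    (hM : ActInvariant (ρ.Lact lam a β) M) {f : ℤ →₀ W} (hf : f ∈ M) (j : ℤ) :
    Finsupp.single j (f j) ∈ M := by
  classical
  have hprod : ∀ s : Finset ℤ, ∃ g ∈ M, ∀ i, g i = (∏ l ∈ s, ((i : ℂ) - l)) • f i := by
    intro s
    induction s using Finset.induction_on with
    | empty => exact ⟨f, hf, by simp⟩
    | insert l s hl ih =>
      obtain ⟨g, hg, hgi⟩ := ih
      refine ⟨ρ.Lact lam a β 0 g - (a + (l : ℂ)) • g,
        M.sub_mem (hM 0 g hg) (M.smul_mem _ hg), fun i => ?_⟩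
      rw [Finsupp.sub_apply, Finsupp.smul_apply, Lact_zero_apply, hgi, Finset.prod_insert hl]
      module
  obtain ⟨g, hg, hgi⟩ := hprod (f.support.erase j)
  set c : ℂ := ∏ l ∈ f.support.erase j, ((j : ℂ) - l) with hc
  have hc0 : c ≠ 0 := by
    refine Finset.prod_ne_zero_iff.mpr fun l hl => sub_ne_zero.mpr fun h => ?_
    exact (Finset.mem_erase.mp hl).1 (by exact_mod_cast h.symm)
  have hg' : g = c • Finsupp.single j (f j) := by
    ext i
    rw [hgi, Finsupp.smul_apply]
    rcases eq_or_ne i j with rfl | hij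
    · rw [Finsupp.single_eq_same]
    · rw [Finsupp.single_eq_of_ne hij, smul_zero]
      by_cases hi : i ∈ f.support
      · rw [Finset.prod_eq_zero (Finset.mem_erase.mpr ⟨hij, hi⟩) (sub_self (i : ℂ)), zero_smul]
      · rw [Finsupp.notMem_support_iff.mp hi, smul_zero]
  have := M.smul_mem c⁻¹ hg
  rwa [hg', smul_smul, inv_mul_cancel₀ hc0, one_smul] at this

theorem actSimple_iff_poly (hO : ρ.InO) {w₀ : W} {γ : ℂ} (h0 : ρ.d 0 w₀ = (-γ) • w₀)
    (hpos : ∀ i : ℤ, 1 ≤ i → ρ.d i w₀ = 0) (hbij : Function.Bijective (ρ.ofPoly w₀))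
    (lam a β : ℂ) :
    ActSimple (ρ.Lact lam a β) ↔
      ∀ U, PolyInvariant lam a β γ U → (∀ j, U j = ⊥) ∨ ∀ j, U j = ⊤ := by
  have hact := fun k j f => Lact_single_ofPoly hO h0 hpos lam a β k j f
  constructor
  · rintro ⟨-, hs⟩ U hU
    have hmem : ∀ j f, Finsupp.single j (ρ.ofPoly w₀ f) ∈
        gradedSub (fun j => (U j).map (ρ.ofPoly w₀)) ↔ f ∈ U j := by
      intro j f
      constructor
      · intro h
        obtain ⟨g, hg, hgf⟩ := h j
        rw [Finsupp.single_eq_same] at hgf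
        rwa [← hbij.1 hgf]
      · intro h i
        rcases eq_or_ne i j with rfl | hij
        · rw [Finsupp.single_eq_same]
          exact ⟨f, h, rfl⟩
        · rw [Finsupp.single_eq_of_ne hij]
          exact Submodule.zero_mem _
    have hinv : ActInvariant (ρ.Lact lam a β) (gradedSub fun j => (U j).map (ρ.ofPoly w₀)) := by
      intro k u hu
      rw [Lact, Finsupp.sum]
      refine Submodule.sum_mem _ fun j _ => ?_
      rw [← Lact_single]
      obtain ⟨f, hf, hfu⟩ := hu j
      rw [← hfu, hact, hmem]
      exact hU j k f hf
    refine (hs _ hinv).imp (fun h j => ?_) (fun h j => ?_)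
    · refine eq_bot_iff.mpr fun f hf => ?_
      rw [← hmem, h, Submodule.mem_bot, Finsupp.single_eq_zero] at hf
      exact hbij.1 (hf.trans (map_zero _).symm)
    · refine eq_top_iff.mpr fun f _ => ?_
      rw [← hmem, h]
      exact Submodule.mem_top
  · intro H
    refine ⟨⟨Finsupp.single 0 (ρ.ofPoly w₀ 1), ?_⟩, fun M hM => ?_⟩
    · rw [Ne, Finsupp.single_eq_zero, ← map_zero (ρ.ofPoly w₀)]
      exact fun h => one_ne_zero (hbij.1 h)
    have hinv : PolyInvariant lam a β γ
        (fun j => M.comap (Finsupp.lsingle j ∘ₗ ρ.ofPoly w₀)) := by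
      intro j k f hf
      have := hM k _ hf
      simp only [LinearMap.comp_apply, Finsupp.lsingle_apply, hact] at this
      exact this
    refine (H _ hinv).imp (fun h => ?_) (fun h => ?_)
    · refine eq_bot_iff.mpr fun u hu => ?_
      rw [Submodule.mem_bot]
      ext j
      obtain ⟨f, hf⟩ := hbij.2 (u j)
      have hfm : f ∈ M.comap (Finsupp.lsingle j ∘ₗ ρ.ofPoly w₀) := by
        simpa [hf] using single_apply_mem hM hu j
      rw [h j, Submodule.mem_bot] at hfm
      rw [← hf, hfm, map_zero, Finsupp.zero_apply]
    · refine eq_top_iff.mpr fun u _ => ?_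
      rw [← Finsupp.sum_single u]
      refine Submodule.sum_mem _ fun j _ => ?_
      obtain ⟨f, hf⟩ := hbij.2 (u j)
      have hfm : f ∈ M.comap (Finsupp.lsingle j ∘ₗ ρ.ofPoly w₀) := by
        rw [h j]
        exact Submodule.mem_top
      simpa [hf] using hfm

end WittRep

theorem polyInvariant_span_one (a β γ : ℂ) :
    PolyInvariant 1 a β γ fun _ => Submodule.span ℂ {1} := by
  intro j k f hf
  obtain ⟨c, rfl⟩ := Submodule.mem_span_singleton.mp hf
  refine Submodule.mem_span_singleton.mpr ⟨c * (a + k * β + j - k * γ), ?_⟩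
  refine Polynomial.funext fun x => ?_
  simp [polyAct]
  ring

theorem polyInvariant_ker_eval_zero (lam a β : ℂ) :
    PolyInvariant lam a β 0 fun _ => LinearMap.ker (leval (0 : ℂ)) := by
  intro j k f hf
  have hf' : f.eval 0 = 0 := hf
  change (polyAct lam a β 0 j k f).eval 0 = 0
  simp [polyAct, hf']

theorem polyInvariant_ker_eval_weight (lam a γ : ℂ) :
    PolyInvariant lam a 1 γ fun j => LinearMap.ker (leval (a + (j : ℂ))) := by
  intro j k f hf
  have hf' : f.eval (a + (j : ℂ)) = 0 := hf
  change (polyAct lam a 1 γ j k f).eval (a + ((k + j : ℤ) : ℂ)) = 0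
  have h1 : a + ((k : ℂ) + j) - k = a + j := by ring
  simp [polyAct, h1, hf']
  left
  ring

/-- The polynomials of parity `(-1)^j` with respect to the reflection `x ↦ a + j - x`. -/
noncomputable def reflectionEigenspace (a : ℂ) (j : ℤ) : Submodule ℂ ℂ[X] where
  carrier := {f | f.comp (C (a + (j : ℂ)) - X) = (-1 : ℂ) ^ j • f}
  add_mem' {f g} hf hg := by
    simp only [Set.mem_ofPred_eq, add_comp, smul_add] at *
    rw [hf, hg]
  zero_mem' := by simp
  smul_mem' c f hf := by
    simp only [Set.mem_ofPred_eq, smul_comp] at *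
    rw [hf, smul_comm]

theorem polyInvariant_reflectionEigenspace (a γ : ℂ) :
    PolyInvariant (-1) a (1 - γ) γ (reflectionEigenspace a) := by
  intro j k f hf
  have hf' : ∀ x, f.eval (a + j - x) = (-1) ^ j * f.eval x := by
    intro x
    have hf'' : f.comp (C (a + (j : ℂ)) - X) = (-1 : ℂ) ^ j • f := hf
    simpa using congrArg (eval x) hf''
  change (polyAct (-1) a (1 - γ) γ j k f).comp (C (a + ((k + j : ℤ) : ℂ)) - X) =
    (-1 : ℂ) ^ (k + j) • polyAct (-1) a (1 - γ) γ j k f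
  refine Polynomial.funext fun x => ?_
  have h1 : a + ((k : ℂ) + j) - x - k = a + j - x := by ring
  have h2 : a + ((k : ℂ) + j) - x = a + j - (x - k) := by ring
  have hk : ((-1 : ℂ) ^ k) * (-1) ^ k = 1 := by
    rw [← mul_zpow]
    simp
  simp only [polyAct, eval_comp, eval_add, eval_mul, eval_sub, eval_C, eval_X, eval_smul,
    smul_eq_mul, zpow_add₀ (show (-1 : ℂ) ≠ 0 by simp)]
  push_cast
  rw [h1, hf' x, h2, hf' (x - k)]
  linear_combination (-((-1) ^ j * (x - k * γ) * f.eval (x - k))) * hk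

theorem stmt14 {W : Type*} [AddCommGroup W] [Module ℂ W] (ρ : WittRep W)
    (hO : ρ.InO) (h b γ p : ℂ)
    (hcase : (γ ≠ 0 ∧ ρ.IsSimple ∧ ∃ w₀ : W, ρ.IsHW w₀ (-γ)) ∨
      (γ = 0 ∧ ∃ w₀ : W, ρ.IsVerma w₀ 0)) :
    ActSimple (ρ.Lact (Complex.exp h) b (γ + p)) ↔
      ((Complex.exp h ≠ 1 ∧ Complex.exp h ≠ -1 ∧ γ ≠ 0 ∧ γ ≠ 1 - p) ∨
       (Complex.exp h = -1 ∧ γ ≠ 0 ∧ γ ≠ 1 - p ∧ γ ≠ (1 - p) / 2)) := by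
  have hlam : Complex.exp h ≠ 0 := Complex.exp_ne_zero h
  obtain ⟨w₀, h0, hpos, hbij⟩ : ∃ w₀ : W, ρ.d 0 w₀ = (-γ) • w₀ ∧
      (∀ i : ℤ, 1 ≤ i → ρ.d i w₀ = 0) ∧ Function.Bijective (ρ.ofPoly w₀) := by
    rcases hcase with ⟨hγ, hs, w₀, hw⟩ | ⟨rfl, w₀, hv⟩
    · exact ⟨w₀, hw.2.1, hw.2.2, WittRep.ofPoly_injective hO hγ hw,
        WittRep.ofPoly_surjective hs hw⟩
    · exact ⟨w₀, by simpa using hv.1, hv.2.1, WittRep.ofPoly_bijective_of_isVerma hv⟩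
  rw [WittRep.actSimple_iff_poly hO h0 hpos hbij]
  generalize Complex.exp h = lam at hlam ⊢
  constructor
  · intro H
    have h1 : lam ≠ 1 := by
      rintro rfl
      rcases H _ (polyInvariant_span_one b (γ + p) γ) with hU | hU
      · exact one_ne_zero (Submodule.span_singleton_eq_bot.mp (hU 0))
      · obtain ⟨c, hc⟩ := Submodule.mem_span_singleton.mp
          ((hU 0).symm ▸ Submodule.mem_top : (X : ℂ[X]) ∈ Submodule.span ℂ {1})
        simpa [coeff_one] using congrArg (fun q => q.coeff 1) hc
    have hγ : γ ≠ 0 := by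
      rintro rfl
      rcases H _ (polyInvariant_ker_eval_zero lam b (0 + p)) with hU | hU
      · have : (X : ℂ[X]) ∈ LinearMap.ker (leval (0 : ℂ)) := by simp [leval]
        rw [hU 0] at this
        exact X_ne_zero this
      · have : (1 : ℂ[X]) ∈ LinearMap.ker (leval (0 : ℂ)) := hU 0 ▸ Submodule.mem_top
        simp [leval] at this
    have hγp : γ ≠ 1 - p := by
      intro hp
      have hβ : γ + p = 1 := by rw [hp]; ring
      rw [hβ] at H
      rcases H _ (polyInvariant_ker_eval_weight lam b γ) with hU | hU
      · have : (X - C (b + ((0 : ℤ) : ℂ)) : ℂ[X]) ∈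
            LinearMap.ker (leval (b + ((0 : ℤ) : ℂ))) := by simp [leval]
        rw [hU 0] at this
        exact X_sub_C_ne_zero _ this
      · have : (1 : ℂ[X]) ∈ LinearMap.ker (leval (b + ((0 : ℤ) : ℂ))) :=
          hU 0 ▸ Submodule.mem_top
        simp [leval] at this
    by_cases h2 : lam = -1
    · refine Or.inr ⟨h2, hγ, hγp, fun hp => ?_⟩
      have hβ : γ + p = 1 - γ := by rw [hp]; ring
      rw [hβ, h2] at H
      have hpar : ∀ j : ℤ, (1 : ℂ[X]) ∈ reflectionEigenspace b j ↔ (-1 : ℂ) ^ j = 1 := by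
        intro j
        change (1 : ℂ[X]).comp _ = _ ↔ _
        rw [one_comp, smul_eq_C_mul, mul_one, ← C_1, C_inj, eq_comm]
      rcases H _ (polyInvariant_reflectionEigenspace b γ) with hU | hU
      · have := (hpar 0).mpr (zpow_zero _)
        rw [hU 0] at this
        exact one_ne_zero this
      · have := (hpar 1).mp (hU 1 ▸ Submodule.mem_top)
        norm_num at this
    · exact Or.inl ⟨h1, h2, hγ, hγp⟩
  · intro H U hU
    have h1 : lam ≠ 1 := by
      rcases H with H | H
      · exact H.1
      · rw [H.1]
        norm_num
    have hγ : γ ≠ 0 := by tauto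
    have hγp : γ ≠ 1 - p := by tauto
    refine hU.eq_bot_or_eq_top hlam h1 hγ (fun hβ => hγp (by linear_combination hβ)) ?_
    intro h2 hβ
    rcases H with H | H
    · exact H.2.1 h2
    · exact H.2.2.2 (by linear_combination hβ / 2)
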